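/- Let k, ℓ ≥ 1 and let P, P' be database properties. Suppose that for every x = (x_1,…,x_k) ∈ X^k with pairwise distinct entries and every D ∈ DB there is a finite family (L_t)_t of database properties, each L_t being ℓ-local with support supp(L_t) ⊆ {x_1,…,x_k} of size at most ℓ, such that P'|_{D|^x} ⊆ ∪_t L_t and (∪_t L_t) ∩ P|_{D|^x} = ∅. Then ⟦P → P'⟧_k ≤ max over all such x and D of e·ℓ·√(10 · Σ_t max_{t' ∈ supp(L_t)} max_{D''} ρ(L_t, t', D'')), where D'' ranges over all databases agreeing with D at every point outside supp(L_t), and ρ(L_t, t', D'') := |{r ∈ Y : D''[t'↦r] ∈ L_t}|/M if the set {r ∈ Ȳ : D''[t'↦r] ∈ L_t} is neither empty nor all of Ȳ, and ρ(L_t, t', D'') := 0 otherwise; e is Euler's number. -/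

import Mathlib

noncomputable section

/- `Ȳ = Y ∪ {⊥}` is modeled by `Option Y` (`⊥ = none`), databases by `X → Option Y`,
and `ℂ[DB]` by `EuclideanSpace ℂ (X → Option Y)`. -/

/-- matrix (in the computational basis) of the single-register unitary `Comp` -/
def compMat (Y : Type*) [Fintype Y] [DecidableEq Y] :
    Matrix (Option Y) (Option Y) ℂ :=
  Matrix.of fun u v =>
    match u, v with
    | none, none => 0
    | some _, none => ((Real.sqrt (Fintype.card Y) : ℝ) : ℂ)⁻¹
    | none, some _ => ((Real.sqrt (Fintype.card Y) : ℝ) : ℂ)⁻¹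
    | some a, some b => (if a = b then (1 : ℂ) else 0) - ((Fintype.card Y : ℕ) : ℂ)⁻¹

/-- matrix of the diagonal unitary `O_ŷ` associated to a character `ŷ` of `Y` -/
def oMat {Y : Type*} [Fintype Y] [DecidableEq Y] [AddCommGroup Y] (c : AddChar Y ℂ) :
    Matrix (Option Y) (Option Y) ℂ :=
  Matrix.diagonal fun u => Option.elim u 1 fun r => c r

/-- matrix of the single-register compressed oracle `cO_ŷ = Comp ∘ O_ŷ ∘ Comp` -/
def cOMat {Y : Type*} [Fintype Y] [DecidableEq Y] [AddCommGroup Y] (c : AddChar Y ℂ) :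
    Matrix (Option Y) (Option Y) ℂ :=
  compMat Y * oMat c * compMat Y

/-- a single-register operator (given by its matrix `m`) acting at register `x0` -/
def liftMat {X Y : Type*} [Fintype X] [DecidableEq X] [DecidableEq Y] (x0 : X)
    (m : Matrix (Option Y) (Option Y) ℂ) :
    Matrix (X → Option Y) (X → Option Y) ℂ :=
  Matrix.of fun D' D => if ∀ a, a ≠ x0 → D' a = D a then m (D' x0) (D x0) else 0

/-- matrix of `cO_{x,ŷ}`: the composition of `cO_{ŷ i}` acting at register `x i` -/
def cOparMat {X Y : Type*} [Fintype X] [DecidableEq X] [Fintype Y] [DecidableEq Y]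
    [AddCommGroup Y] {k : ℕ} (x : Fin k → X) (c : Fin k → AddChar Y ℂ) :
    Matrix (X → Option Y) (X → Option Y) ℂ :=
  (List.ofFn fun i : Fin k => liftMat (x i) (cOMat (c i))).prod

/-- matrix of the orthogonal projection onto `span{e_D : D ∈ P}` -/
def projMat {ι : Type*} [DecidableEq ι] (P : Set ι) : Matrix ι ι ℂ := by
  classical exact Matrix.of fun i j => if i = j ∧ i ∈ P then 1 else 0

/-- the (continuous linear) operator on `ℓ²` given by a matrix -/
def toOp {ι : Type*} [Fintype ι] [DecidableEq ι] (m : Matrix ι ι ℂ) :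
    EuclideanSpace ℂ ι →L[ℂ] EuclideanSpace ℂ ι :=
  LinearMap.toContinuousLinearMap (Matrix.toEuclideanLin m)

/-- `D|^x`: the set of databases that coincide with `D` outside of `x` -/
def agreeOff {X Y : Type*} {k : ℕ} (D : X → Option Y) (x : Fin k → X) :
    Set (X → Option Y) :=
  {D' | ∀ a : X, (∀ i, x i ≠ a) → D' a = D a}

/-- The quantum transition capacity `⟦P → P' | X₀⟧_k`: the supremum, over all `x ∈ X₀^k`
with pairwise distinct entries, all `k`-tuples `ŷ` of characters of `Y` and all databases `D`,
of `‖P'|_{D|^x} ∘ cO_{x,ŷ} ∘ P|_{D|^x}‖` (`0` if the range is empty). -/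
def qtc {X Y : Type*} [Fintype X] [DecidableEq X] [Fintype Y] [DecidableEq Y]
    [AddCommGroup Y] (P P' : Set (X → Option Y)) (k : ℕ) (X₀ : Set X) : ℝ :=
  sSup {v : ℝ | ∃ (x : Fin k → X) (c : Fin k → AddChar Y ℂ) (D : X → Option Y),
    Function.Injective x ∧ (∀ i, x i ∈ X₀) ∧
    v = ‖(toOp (projMat (P' ∩ agreeOff D x))).comp
          ((toOp (cOparMat x c)).comp (toOp (projMat (P ∩ agreeOff D x))))‖}

end

/-! The databases in `P'` are covered by the `L t`, so `‖P' U P‖² ≤ ∑ t, ‖L t * U * P‖²`, and `P`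
may be enlarged to the complement of `L t`. In `‖L * U * Lᶜ‖` the factors of the oracle query `U`
are peeled off one at a time: a factor acting at a register outside the support of `L` cannot cross
from `Lᶜ` to `L`, so at most `ℓ` of them contribute. A single register contributes at most the
Frobenius norm of a block of `cO`. For a nontrivial character the row of a value `u` has an entry of
modulus `M^(-1/2)` in column `⊥` and entries of modulus at most `3 / M` in the other off-diagonal
columns, so each recordable value costs at most `1 / M + M * (3 / M)² = 10 / M`. -/

section CompressedOracle

open scoped Matrix.Norms.L2Operator

section OperatorNorm

theorem blockDiagonal_mulVec {R m n o : Type*} [NonUnitalNonAssocSemiring R] [Fintype n]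
    [Fintype o] [DecidableEq o] (M : o → Matrix m n R) (v : n × o → R)
    (i : m) (k : o) :
    (Matrix.blockDiagonal M).mulVec v (i, k) = (M k).mulVec (fun j => v (j, k)) i := by
  simp [Matrix.mulVec, dotProduct, Matrix.blockDiagonal_apply, Fintype.sum_prod_type]

variable {𝕜 m n m' n' o : Type*} [RCLike 𝕜] [Fintype m] [Fintype n] [DecidableEq n]

theorem l2_opNorm_le_iff_sum_sq {A : Matrix m n 𝕜} {C : ℝ} (hC : 0 ≤ C) :
    ‖A‖ ≤ C ↔ ∀ v : n → 𝕜, ∑ i, ‖A.mulVec v i‖ ^ 2 ≤ C ^ 2 * ∑ j, ‖v j‖ ^ 2 := by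
  rw [Matrix.l2_opNorm_def, ContinuousLinearMap.opNorm_le_iff hC,
    (WithLp.equiv 2 (n → 𝕜)).forall_congr_left]
  refine forall_congr' fun v => ?_
  rw [← sq_le_sq₀ (norm_nonneg _) (by positivity), mul_pow, EuclideanSpace.norm_sq_eq,
    EuclideanSpace.norm_sq_eq]
  rfl

theorem sum_sq_mulVec_le (A : Matrix m n 𝕜) (v : n → 𝕜) :
    ∑ i, ‖A.mulVec v i‖ ^ 2 ≤ ‖A‖ ^ 2 * ∑ j, ‖v j‖ ^ 2 :=
  (l2_opNorm_le_iff_sum_sq (norm_nonneg A)).1 le_rfl v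

theorem l2_opNorm_le_sqrt_sum_sq (A : Matrix m n 𝕜) : ‖A‖ ≤ √(∑ i, ∑ j, ‖A i j‖ ^ 2) := by
  refine (l2_opNorm_le_iff_sum_sq (Real.sqrt_nonneg _)).2 fun v => ?_
  rw [Real.sq_sqrt (by positivity), Finset.sum_mul]
  gcongr with i
  calc ‖A.mulVec v i‖ ^ 2 ≤ (∑ j, ‖A i j‖ * ‖v j‖) ^ 2 := by
        gcongr
        exact (norm_sum_le _ _).trans_eq (Finset.sum_congr rfl fun j _ => norm_mul _ _)
    _ ≤ (∑ j, ‖A i j‖ ^ 2) * ∑ j, ‖v j‖ ^ 2 := Finset.sum_mul_sq_le_sq_mul_sq _ _ _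

theorem l2_opNorm_submatrix_equiv_le [Fintype m'] [Fintype n'] [DecidableEq n']
    (A : Matrix m n 𝕜) (e : m' ≃ m) (f : n' ≃ n) : ‖A.submatrix e f‖ ≤ ‖A‖ := by
  refine (l2_opNorm_le_iff_sum_sq (norm_nonneg A)).2 fun v => ?_
  rw [Matrix.submatrix_mulVec_equiv, ← f.symm.sum_comp fun j => ‖v j‖ ^ 2]
  exact (e.sum_comp fun i => ‖A.mulVec (v ∘ f.symm) i‖ ^ 2).trans_le (sum_sq_mulVec_le _ _)

theorem l2_opNorm_blockDiagonal_le [Fintype o] [DecidableEq o] {M : o → Matrix m n 𝕜} {C : ℝ}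
    (hC : 0 ≤ C) (hM : ∀ k, ‖M k‖ ≤ C) : ‖Matrix.blockDiagonal M‖ ≤ C := by
  refine (l2_opNorm_le_iff_sum_sq hC).2 fun v => ?_
  simp only [Fintype.sum_prod_type_right, blockDiagonal_mulVec, Finset.mul_sum (ι := o)]
  gcongr with k
  exact (l2_opNorm_le_iff_sum_sq hC).1 (hM k) _

end OperatorNorm

section Projections

variable {ι κ τ : Type*} [DecidableEq ι]

theorem projMat_eq_diagonal (S : Set ι) : projMat S = Matrix.diagonal (S.indicator 1) := by
  classical
  ext i j
  simp only [projMat, Matrix.of_apply, Matrix.diagonal_apply, Set.indicator_apply, Pi.one_apply,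
    ite_and]

theorem projMat_empty : projMat (∅ : Set ι) = 0 := by
  rw [projMat_eq_diagonal, Set.indicator_empty, Matrix.diagonal_zero]

theorem projMat_univ : projMat (Set.univ : Set ι) = 1 := by
  rw [projMat_eq_diagonal, Set.indicator_univ, Matrix.diagonal_one']

theorem projMat_add_projMat_compl (S : Set ι) : projMat S + projMat Sᶜ = 1 := by
  rw [projMat_eq_diagonal, projMat_eq_diagonal, Matrix.diagonal_add]
  exact (congrArg _ (S.indicator_self_add_compl 1)).trans Matrix.diagonal_one'

variable [Fintype ι]

theorem projMat_mul_projMat (S T : Set ι) : projMat S * projMat T = projMat (S ∩ T) := by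
  rw [projMat_eq_diagonal, projMat_eq_diagonal, projMat_eq_diagonal,
    Matrix.diagonal_mul_diagonal, Set.inter_indicator_one]
  rfl

theorem norm_projMat_le_one (S : Set ι) : ‖projMat S‖ ≤ 1 := by
  rw [projMat_eq_diagonal, Matrix.l2_opNorm_diagonal]
  refine (pi_norm_le_iff_of_nonneg zero_le_one).2 fun i => ?_
  exact (norm_indicator_le_norm_self _ _).trans_eq norm_one

theorem projMat_mulVec (S : Set ι) (v : ι → ℂ) : (projMat S).mulVec v = S.indicator v := by
  ext i
  rw [projMat_eq_diagonal, Matrix.mulVec_diagonal, ← Set.indicator_mul_left]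
  simp

theorem projMat_mul_mul_projMat_apply [Fintype κ] [DecidableEq κ] (S : Set ι) (T : Set κ)
    (A : Matrix ι κ ℂ) (i : ι) (j : κ) :
    (projMat S * A * projMat T) i j = S.indicator 1 i * A i j * T.indicator 1 j := by
  rw [projMat_eq_diagonal, projMat_eq_diagonal, Matrix.mul_diagonal, Matrix.diagonal_mul]

theorem l2_opNorm_projMat_mul_mul_projMat_le [Fintype κ] [DecidableEq κ] (S : Finset ι)
    (T : Finset κ) (A : Matrix ι κ ℂ) :
    ‖projMat (S : Set ι) * A * projMat (T : Set κ)‖ ≤ √(∑ i ∈ S, ∑ j ∈ T, ‖A i j‖ ^ 2) := by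
  refine (l2_opNorm_le_sqrt_sum_sq _).trans_eq (congrArg Real.sqrt ?_)
  classical
  simp [projMat_mul_mul_projMat_apply, Set.indicator_apply, apply_ite, Finset.sum_ite_mem]

theorem sq_norm_projMat_mul_le_sum [Fintype κ] [DecidableEq κ] [Fintype τ] {S : Set ι}
    {L : τ → Set ι} (hS : S ⊆ ⋃ t, L t) (V : Matrix ι κ ℂ) :
    ‖projMat S * V‖ ^ 2 ≤ ∑ t, ‖projMat (L t) * V‖ ^ 2 := by
  refine (Real.le_sqrt (norm_nonneg _) (by positivity)).1
    ((l2_opNorm_le_iff_sum_sq (Real.sqrt_nonneg _)).2 fun v => ?_)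
  have indicator_le (w : ι → ℂ) (i : ι) :
      ‖S.indicator w i‖ ^ 2 ≤ ∑ t, ‖(L t).indicator w i‖ ^ 2 := by
    by_cases hi : i ∈ S
    · obtain ⟨t, ht⟩ := Set.mem_iUnion.1 (hS hi)
      rw [Set.indicator_of_mem hi, ← Set.indicator_of_mem ht w]
      exact Finset.single_le_sum (f := fun t => ‖(L t).indicator w i‖ ^ 2)
        (fun _ _ => by positivity) (Finset.mem_univ t)
    · rw [Set.indicator_of_notMem hi, norm_zero, zero_pow two_ne_zero]
      positivity
  rw [Real.sq_sqrt (by positivity)]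
  calc ∑ i, ‖(projMat S * V).mulVec v i‖ ^ 2
      ≤ ∑ i, ∑ t, ‖(projMat (L t) * V).mulVec v i‖ ^ 2 := by
        simp only [← Matrix.mulVec_mulVec, projMat_mulVec]
        exact Finset.sum_le_sum fun i _ => indicator_le _ i
    _ = ∑ t, ∑ i, ‖(projMat (L t) * V).mulVec v i‖ ^ 2 := Finset.sum_comm
    _ ≤ (∑ t, ‖projMat (L t) * V‖ ^ 2) * ∑ j, ‖v j‖ ^ 2 := by
        rw [Finset.sum_mul]
        exact Finset.sum_le_sum fun t _ => sum_sq_mulVec_le _ v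

theorem norm_mul_projMat_le_of_subset [Fintype κ] {S T : Set ι} (hST : S ⊆ T)
    (A : Matrix κ ι ℂ) : ‖A * projMat S‖ ≤ ‖A * projMat T‖ := by
  rw [← Set.inter_eq_self_of_subset_right hST, ← projMat_mul_projMat, ← Matrix.mul_assoc]
  exact (Matrix.l2_opNorm_mul _ _).trans
    (mul_le_of_le_one_right (norm_nonneg _) (norm_projMat_le_one S))

theorem sq_norm_projMat_mul_mul_projMat_le_sum [Fintype τ] {P P' : Set ι} {L : τ → Set ι}
    (hcover : P' ⊆ ⋃ t, L t) (hdisj : Disjoint (⋃ t, L t) P) (U : Matrix ι ι ℂ) :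
    ‖projMat P' * U * projMat P‖ ^ 2 ≤ ∑ t, ‖projMat (L t) * U * projMat (L t)ᶜ‖ ^ 2 := by
  rw [mul_assoc]
  refine (sq_norm_projMat_mul_le_sum hcover _).trans ?_
  gcongr with t
  rw [← mul_assoc]
  have hP : P ⊆ (L t)ᶜ := (hdisj.mono_left (Set.subset_iUnion L t)).subset_compl_left
  exact norm_mul_projMat_le_of_subset hP _

end Projections

-- `p A B q = (p A q) (B q) + (p A) (p B q)`, since `p + q = 1`.
theorem norm_mul_list_prod_mul_le_sum {R : Type*} [SeminormedRing R] [NormOneClass R] {p q : R}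
    (hp : ‖p‖ ≤ 1) (hq : ‖q‖ ≤ 1) (hadd : p + q = 1) (hmul : p * q = 0) {l : List R}
    (hl : ∀ A ∈ l, ‖A‖ ≤ 1) :
    ‖p * l.prod * q‖ ≤ (l.map fun A => ‖p * A * q‖).sum := by
  induction l with
  | nil => simp [hmul]
  | cons A l ih =>
    obtain ⟨hA, hl⟩ := List.forall_mem_cons.1 hl
    have hprod : ‖l.prod‖ ≤ 1 := (Submonoid.mem_unitClosedBall R).1
      (Submonoid.list_prod_mem _ fun B hB => (Submonoid.mem_unitClosedBall R).2 (hl B hB))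
    have hprod_q : ‖l.prod * q‖ ≤ 1 :=
      (norm_mul_le _ _).trans (mul_le_one₀ hprod (norm_nonneg _) hq)
    have hpA : ‖p * A‖ ≤ 1 := (norm_mul_le _ _).trans (mul_le_one₀ hp (norm_nonneg _) hA)
    have hsplit : p * (A * l.prod) * q = p * A * q * (l.prod * q) + p * A * (p * l.prod * q) :=
      calc p * (A * l.prod) * q = p * A * (p + q) * l.prod * q := by
            rw [hadd, mul_one, ← mul_assoc p]
        _ = p * A * q * (l.prod * q) + p * A * (p * l.prod * q) := by noncomm_ring
    rw [List.prod_cons, List.map_cons, List.sum_cons, hsplit]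
    refine norm_add_le_of_le ?_ ?_
    · exact (norm_mul_le _ _).trans (mul_le_of_le_one_right (norm_nonneg _) hprod_q)
    · exact (norm_mul_le _ _).trans ((mul_le_of_le_one_left (norm_nonneg _) hpA).trans (ih hl))

section Register

theorem funSplitAt_symm_eq_update {X Z : Type*} [DecidableEq X] (x₀ : X) (r z : Z)
    (E : {a // a ≠ x₀} → Z) :
    (Equiv.funSplitAt x₀ Z).symm (r, E) =
      Function.update ((Equiv.funSplitAt x₀ Z).symm (z, E)) x₀ r := by
  ext a
  by_cases ha : a = x₀ <;> simp [ha]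

theorem projMat_eq_submatrix_blockDiagonal {ι n o : Type*} [DecidableEq ι] [DecidableEq n]
    [DecidableEq o] (e : ι ≃ n × o) (S : Set ι) :
    projMat S = (Matrix.blockDiagonal fun k => projMat {i | e.symm (i, k) ∈ S}).submatrix e e := by
  simp only [projMat_eq_diagonal, Matrix.blockDiagonal_diagonal, Matrix.submatrix_diagonal_equiv]
  congr 1
  ext i
  exact congrArg (S.indicator 1) (e.symm_apply_apply i).symm

variable {X Y : Type*} [Fintype X] [DecidableEq X] [DecidableEq Y]

theorem liftMat_eq_submatrix_blockDiagonal (x₀ : X) (m : Matrix (Option Y) (Option Y) ℂ) :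
    liftMat x₀ m = (Matrix.blockDiagonal fun _ => m).submatrix
      (Equiv.funSplitAt x₀ (Option Y)) (Equiv.funSplitAt x₀ (Option Y)) := by
  ext D' D
  simp [liftMat, Matrix.blockDiagonal_apply, funext_iff]

variable [Fintype Y]

theorem norm_projMat_mul_liftMat_mul_projMat_le {S T : Set (X → Option Y)} {x₀ : X}
    {m : Matrix (Option Y) (Option Y) ℂ} {C : ℝ} (hC : 0 ≤ C)
    (h : ∀ D : X → Option Y, ‖projMat (Function.update D x₀ ⁻¹' S) * m *
      projMat (Function.update D x₀ ⁻¹' T)‖ ≤ C) :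
    ‖projMat S * liftMat x₀ m * projMat T‖ ≤ C := by
  rw [projMat_eq_submatrix_blockDiagonal (Equiv.funSplitAt x₀ (Option Y)) S,
    projMat_eq_submatrix_blockDiagonal (Equiv.funSplitAt x₀ (Option Y)) T,
    liftMat_eq_submatrix_blockDiagonal, Matrix.submatrix_mul_equiv, Matrix.submatrix_mul_equiv,
    ← Matrix.blockDiagonal_mul, ← Matrix.blockDiagonal_mul]
  refine (l2_opNorm_submatrix_equiv_le _ _ _).trans (l2_opNorm_blockDiagonal_le hC fun E => ?_)
  have hfiber (U : Set (X → Option Y)) : {r | (Equiv.funSplitAt x₀ (Option Y)).symm (r, E) ∈ U} =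
      Function.update ((Equiv.funSplitAt x₀ (Option Y)).symm (none, E)) x₀ ⁻¹' U := by
    ext r
    rw [Set.mem_preimage, ← funSplitAt_symm_eq_update]
    rfl
  rw [hfiber, hfiber]
  exact h _

theorem norm_liftMat_le (x₀ : X) (m : Matrix (Option Y) (Option Y) ℂ) :
    ‖liftMat x₀ m‖ ≤ ‖m‖ := by
  simpa [projMat_univ] using norm_projMat_mul_liftMat_mul_projMat_le (S := Set.univ)
    (T := Set.univ) (x₀ := x₀) (norm_nonneg m) (by simp [projMat_univ])

end Register

section Oracle

/-- The vector `e_⊥ - M^(-1/2) ∑ r, e_r` of squared norm `2`; `Comp` is the reflection in the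
hyperplane orthogonal to it. -/
noncomputable def compVec (Y : Type*) [Fintype Y] : Option Y → ℂ :=
  fun u => u.elim 1 fun _ => -((√(Fintype.card Y) : ℝ) : ℂ)⁻¹

theorem inv_sqrt_natCast_mul_self (n : ℕ) :
    ((√n : ℝ) : ℂ)⁻¹ * ((√n : ℝ) : ℂ)⁻¹ = (n : ℂ)⁻¹ := by
  rw [← mul_inv, ← Complex.ofReal_mul, Real.mul_self_sqrt n.cast_nonneg, Complex.ofReal_natCast]

theorem compMat_eq_one_sub_vecMulVec (Y : Type*) [Fintype Y] [DecidableEq Y] :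
    compMat Y = 1 - Matrix.vecMulVec (compVec Y) (compVec Y) := by
  ext u v
  rcases u with _ | a <;> rcases v with _ | b <;>
    simp [compMat, compVec, Matrix.vecMulVec_apply, Matrix.one_apply, inv_sqrt_natCast_mul_self]

theorem compVec_dotProduct_self (Y : Type*) [Fintype Y] [Nonempty Y] :
    compVec Y ⬝ᵥ compVec Y = 2 := by
  simp [dotProduct, compVec, Fintype.sum_option, inv_sqrt_natCast_mul_self, one_add_one_eq_two]

theorem compMat_mul_self (Y : Type*) [Fintype Y] [DecidableEq Y] [Nonempty Y] :
    compMat Y * compMat Y = 1 := by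
  rw [compMat_eq_one_sub_vecMulVec, sub_mul, mul_sub, mul_sub, Matrix.vecMulVec_mul_vecMulVec,
    compVec_dotProduct_self, two_smul, Matrix.vecMulVec_add]
  simp

theorem star_compMat (Y : Type*) [Fintype Y] [DecidableEq Y] : star (compMat Y) = compMat Y := by
  ext u v
  rcases u with _ | a <;> rcases v with _ | b <;>
    simp [compMat, Matrix.star_apply, eq_comm]

theorem compMat_mem_unitaryGroup (Y : Type*) [Fintype Y] [DecidableEq Y] [Nonempty Y] :
    compMat Y ∈ Matrix.unitaryGroup (Option Y) ℂ :=
  Matrix.mem_unitaryGroup_iff.2 (by rw [star_compMat, compMat_mul_self])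

variable {Y : Type*} [Fintype Y] [DecidableEq Y] [AddCommGroup Y] {c : AddChar Y ℂ}

theorem oMat_mem_unitaryGroup (c : AddChar Y ℂ) :
    oMat c ∈ Matrix.unitaryGroup (Option Y) ℂ := by
  rw [Matrix.mem_unitaryGroup_iff, Matrix.star_eq_conjTranspose, oMat,
    Matrix.diagonal_conjTranspose, Matrix.diagonal_mul_diagonal, ← Matrix.diagonal_one]
  congr 1
  ext u
  rcases u with _ | r <;> simp [Complex.mul_conj, Complex.normSq_eq_norm_sq, AddChar.norm_apply]

theorem cOMat_mem_unitaryGroup (c : AddChar Y ℂ) :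
    cOMat c ∈ Matrix.unitaryGroup (Option Y) ℂ :=
  mul_mem (mul_mem (compMat_mem_unitaryGroup Y) (oMat_mem_unitaryGroup c))
    (compMat_mem_unitaryGroup Y)

theorem cOMat_zero : cOMat (0 : AddChar Y ℂ) = 1 := by
  have hO : oMat (0 : AddChar Y ℂ) = 1 := by
    rw [oMat, ← Matrix.diagonal_one]
    congr 1
    ext u
    cases u <;> simp
  rw [cOMat, hO, mul_one, compMat_mul_self]

theorem cOMat_apply (c : AddChar Y ℂ) (u v : Option Y) :
    cOMat c u v = compMat Y u none * compMat Y none v +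
      ∑ r, compMat Y u (some r) * c r * compMat Y (some r) v := by
  rw [cOMat, oMat, Matrix.mul_apply, Fintype.sum_option]
  simp only [Matrix.mul_diagonal, Option.elim_none, Option.elim_some, mul_one]

theorem cOMat_some_none (hc : c ≠ 0) (u : Y) :
    cOMat c (some u) none = c u * ((√(Fintype.card Y) : ℝ) : ℂ)⁻¹ := by
  simp [cOMat_apply, compMat, sub_mul, ← Finset.sum_mul, ← Finset.mul_sum,
    AddChar.sum_eq_zero_iff_ne_zero.2 hc]

theorem cOMat_some_some (hc : c ≠ 0) {u v : Y} (huv : u ≠ v) :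
    cOMat c (some u) (some v) = (1 - c u - c v) / Fintype.card Y := by
  calc cOMat c (some u) (some v)
      = (Fintype.card Y : ℂ)⁻¹ +
          (-((Fintype.card Y : ℂ)⁻¹ * c v) - c u * (Fintype.card Y : ℂ)⁻¹) := by
        simp [cOMat_apply, compMat, sub_mul, mul_sub, ← Finset.sum_mul, ← Finset.mul_sum, huv,
          AddChar.sum_eq_zero_iff_ne_zero.2 hc, inv_sqrt_natCast_mul_self]
    _ = (1 - c u - c v) / Fintype.card Y := by ring

theorem norm_cOMat_some_some_le (hc : c ≠ 0) {u v : Y} (huv : u ≠ v) :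
    ‖cOMat c (some u) (some v)‖ ≤ 3 / Fintype.card Y := by
  rw [cOMat_some_some hc huv, norm_div, Complex.norm_natCast]
  gcongr
  calc ‖1 - c u - c v‖ ≤ ‖(1 : ℂ)‖ + ‖c u‖ + ‖c v‖ :=
        norm_sub_le_of_le (norm_sub_le _ _) le_rfl
    _ = 3 := by norm_num [AddChar.norm_apply]

theorem sum_sq_norm_cOMat_some_le (c : AddChar Y ℂ) (u : Y) :
    ∑ v ∈ Finset.univ.erase (some u), ‖cOMat c (some u) v‖ ^ 2 ≤ 10 / Fintype.card Y := by
  rcases eq_or_ne c 0 with rfl | hc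
  · rw [Finset.sum_eq_zero fun v hv => ?_]
    · positivity
    · rw [cOMat_zero, Matrix.one_apply_ne (Finset.ne_of_mem_erase hv).symm, norm_zero,
        zero_pow two_ne_zero]
  have hM : (Fintype.card Y : ℝ) ≠ 0 := Nat.cast_ne_zero.2 Fintype.card_ne_zero
  have hsome (v : Y) (hv : v ∈ Finset.univ.erase u) :
      ‖cOMat c (some u) (some v)‖ ^ 2 ≤ (3 / Fintype.card Y : ℝ) ^ 2 := by
    gcongr
    exact norm_cOMat_some_some_le hc (Finset.ne_of_mem_erase hv).symm
  calc ∑ v ∈ Finset.univ.erase (some u), ‖cOMat c (some u) v‖ ^ 2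
      = ‖cOMat c (some u) none‖ ^ 2 +
          ∑ v ∈ Finset.univ.erase u, ‖cOMat c (some u) (some v)‖ ^ 2 := by
        rw [Finset.sum_erase_eq_sub (Finset.mem_univ _), Finset.sum_erase_eq_sub
          (Finset.mem_univ _), Fintype.sum_option, add_sub_assoc]
    _ ≤ 1 / Fintype.card Y + Fintype.card Y * (3 / Fintype.card Y) ^ 2 := by
        gcongr
        · simp [cOMat_some_none hc, AddChar.norm_apply]
        · refine (Finset.sum_le_card_nsmul _ _ _ hsome).trans ?_
          rw [nsmul_eq_mul]
          gcongr
          exact Finset.card_le_univ _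
    _ = 10 / Fintype.card Y := by
        field_simp
        norm_num

theorem norm_projMat_map_some_mul_cOMat_mul_projMat_compl_le (R : Finset Y) (c : AddChar Y ℂ) :
    ‖projMat (R.map .some : Set (Option Y)) * cOMat c * projMat (R.map .some : Set (Option Y))ᶜ‖ ≤
      √(10 * (R.card / Fintype.card Y)) := by
  rw [← Finset.coe_compl]
  refine (l2_opNorm_projMat_mul_mul_projMat_le _ _ _).trans (Real.sqrt_le_sqrt ?_)
  rw [Finset.sum_map]
  calc ∑ u ∈ R, ∑ v ∈ (R.map .some)ᶜ, ‖cOMat c (some u) v‖ ^ 2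
      ≤ ∑ u ∈ R, ∑ v ∈ Finset.univ.erase (some u), ‖cOMat c (some u) v‖ ^ 2 := by
        refine Finset.sum_le_sum fun u hu =>
          Finset.sum_le_sum_of_subset_of_nonneg ?_ fun _ _ _ => by positivity
        exact Finset.subset_erase.2 ⟨Finset.subset_univ _,
          Finset.notMem_compl.2 (Finset.mem_map_of_mem _ hu)⟩
    _ ≤ R.card • (10 / Fintype.card Y : ℝ) :=
        Finset.sum_le_card_nsmul _ _ _ fun u _ => sum_sq_norm_cOMat_some_le c u
    _ = 10 * (R.card / Fintype.card Y) := by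
        rw [nsmul_eq_mul]
        ring

end Oracle

section Recognizer

variable {X Y : Type*}

/-- The quantity `ρ`: the probability that a uniformly random element of `Y` lies in the set `S` of
values admissible at one register, with value `0` when membership in `S` imposes no condition or
cannot be met. -/
noncomputable def recordProb [Fintype Y] (S : Set (Option Y)) : ℝ :=
  open Classical in
  if S = ∅ ∨ S = Set.univ then 0 else ({y : Y | some y ∈ S}.ncard : ℝ) / Fintype.card Y

theorem recordProb_nonneg [Fintype Y] (S : Set (Option Y)) : 0 ≤ recordProb S := by
  unfold recordProb
  split_ifs <;> positivity

variable [DecidableEq X]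

/-- The maximum of `ρ(L, a, D')` over the points `a ∈ s` and the databases `D'` that agree with `D`
off `s`. As a supremum in `ℝ` it is `0` for `s = ∅`. -/
noncomputable def maxRecordProb [Fintype Y] (L : Set (X → Option Y)) (s : Finset X)
    (D : X → Option Y) : ℝ :=
  sSup {w | ∃ a ∈ s, ∃ D' : X → Option Y, (∀ b ∉ s, D' b = D b) ∧
    w = recordProb {r | Function.update D' a r ∈ L}}

theorem maxRecordProb_nonneg [Fintype Y] (L : Set (X → Option Y)) (s : Finset X)
    (D : X → Option Y) : 0 ≤ maxRecordProb L s D :=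
  Real.sSup_nonneg (by rintro _ ⟨_, _, _, _, rfl⟩; exact recordProb_nonneg _)

/-- `L` is a local database property with support `s`: membership depends only on the values on `s`,
and `⊥ = none` is the least favourable value at a point of `s`. The size of `s` is not bounded
here. -/
structure IsLocalOn (L : Set (X → Option Y)) (s : Finset X) : Prop where
  dependsOn : DependsOn (· ∈ L) s
  update_some_mem : ∀ ⦃D⦄, D ∈ L → ∀ a ∈ s, D a = none → ∀ y, Function.update D a (some y) ∈ L

namespace IsLocalOn

variable {L : Set (X → Option Y)} {s : Finset X}

theorem preimage_update_of_notMem (hL : IsLocalOn L s) (D : X → Option Y) {a : X} (ha : a ∉ s) :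
    Function.update D a ⁻¹' L = ∅ ∨ Function.update D a ⁻¹' L = Set.univ := by
  have hconst (r : Option Y) : r ∈ Function.update D a ⁻¹' L ↔ D ∈ L :=
    (hL.dependsOn fun b hb => Function.update_of_ne (ne_of_mem_of_not_mem hb ha) _ _).to_iff
  by_cases hD : D ∈ L
  · exact Or.inr (Set.eq_univ_of_forall fun r => (hconst r).2 hD)
  · exact Or.inl (Set.eq_empty_of_forall_notMem fun r hr => hD ((hconst r).1 hr))

theorem preimage_update_eq_univ (hL : IsLocalOn L s) {D : X → Option Y} {a : X}
    (h : none ∈ Function.update D a ⁻¹' L) : Function.update D a ⁻¹' L = Set.univ := by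
  by_cases ha : a ∈ s
  · refine Set.eq_univ_of_forall (Option.forall.2 ⟨h, fun y => ?_⟩)
    simpa using hL.update_some_mem h a ha (Function.update_self ..) y
  · exact (hL.preimage_update_of_notMem D ha).resolve_left (Set.nonempty_of_mem h).ne_empty

variable [Fintype Y]

theorem recordProb_preimage_update_of_notMem (hL : IsLocalOn L s) (D : X → Option Y) {a : X}
    (ha : a ∉ s) : recordProb (Function.update D a ⁻¹' L) = 0 :=
  if_pos (hL.preimage_update_of_notMem D ha)

theorem recordProb_preimage_update_le [Finite X] (hL : IsLocalOn L s) (D D' : X → Option Y) {a : X}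
    (ha : a ∈ s) : recordProb (Function.update D' a ⁻¹' L) ≤ maxRecordProb L s D := by
  have hfin : (Set.range fun p : X × (X → Option Y) =>
      recordProb {r | Function.update p.2 p.1 r ∈ L}).Finite := Set.finite_range _
  refine le_csSup (hfin.bddAbove.mono ?_) ⟨a, ha, s.piecewise D' D, fun b hb => ?_, ?_⟩
  · rintro _ ⟨b, -, E, -, rfl⟩
    exact ⟨(b, E), rfl⟩
  · exact Finset.piecewise_eq_of_notMem _ _ _ hb
  · congr 1
    ext r
    refine (hL.dependsOn fun b hb => ?_).to_iff
    rw [Function.update_apply, Function.update_apply, Finset.piecewise_eq_of_mem _ _ _ hb]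

end IsLocalOn

variable [Fintype X] [Fintype Y] [DecidableEq Y] [AddCommGroup Y]
  {L : Set (X → Option Y)} {s : Finset X}

theorem norm_projMat_mul_cOMat_mul_projMat_compl_le {S : Set (Option Y)}
    (hS : none ∈ S → S = Set.univ) (c : AddChar Y ℂ) :
    ‖projMat S * cOMat c * projMat Sᶜ‖ ≤ √(10 * recordProb S) := by
  by_cases htriv : S = ∅ ∨ S = Set.univ
  · rcases htriv with rfl | rfl <;> simp [projMat_empty]
  classical
  have hnone : none ∉ S := mt hS (not_or.1 htriv).2
  have hS_eq : S = (Finset.map .some {y | some y ∈ S} : Finset (Option Y)) := by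
    ext u
    cases u <;> simp [hnone]
  have hprob : recordProb S = (Finset.card {y | some y ∈ S} : ℝ) / Fintype.card Y := by
    rw [recordProb, if_neg htriv, ← Set.ncard_coe_finset, Finset.coe_filter_univ]
  rw [hprob]
  convert norm_projMat_map_some_mul_cOMat_mul_projMat_compl_le {y | some y ∈ S} c

theorem IsLocalOn.norm_projMat_mul_liftMat_cOMat_mul_projMat_compl_le (hL : IsLocalOn L s)
    (c : AddChar Y ℂ) (D : X → Option Y) (a : X) :
    ‖projMat L * liftMat a (cOMat c) * projMat Lᶜ‖ ≤
      if a ∈ s then √(10 * maxRecordProb L s D) else 0 := by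
  refine norm_projMat_mul_liftMat_mul_projMat_le (by positivity) fun D' =>
    (norm_projMat_mul_cOMat_mul_projMat_compl_le hL.preimage_update_eq_univ c).trans ?_
  split_ifs with ha
  · gcongr
    exact hL.recordProb_preimage_update_le D D' ha
  · rw [hL.recordProb_preimage_update_of_notMem D' ha, mul_zero, Real.sqrt_zero]

theorem IsLocalOn.norm_projMat_mul_cOparMat_mul_projMat_compl_le (hL : IsLocalOn L s) {k : ℕ}
    {x : Fin k → X} (hx : Function.Injective x) (c : Fin k → AddChar Y ℂ) (D : X → Option Y) :
    ‖projMat L * cOparMat x c * projMat Lᶜ‖ ≤ s.card * √(10 * maxRecordProb L s D) := by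
  have hcontraction : ∀ A ∈ List.ofFn fun i => liftMat (x i) (cOMat (c i)), ‖A‖ ≤ 1 :=
    (List.forall_mem_ofFn_iff).2 fun i => (norm_liftMat_le _ _).trans_eq
      (CStarRing.norm_of_mem_unitary (cOMat_mem_unitaryGroup (c i)))
  have horth : projMat L * projMat Lᶜ = 0 := by
    rw [projMat_mul_projMat, Set.inter_compl_self, projMat_empty]
  calc ‖projMat L * cOparMat x c * projMat Lᶜ‖
      ≤ ∑ i, ‖projMat L * liftMat (x i) (cOMat (c i)) * projMat Lᶜ‖ := by
        simpa only [cOparMat, List.map_ofFn, List.sum_ofFn, Function.comp_apply] using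
          norm_mul_list_prod_mul_le_sum (norm_projMat_le_one L) (norm_projMat_le_one Lᶜ)
            (projMat_add_projMat_compl L) horth hcontraction
    _ ≤ ∑ i, if x i ∈ s then √(10 * maxRecordProb L s D) else 0 := by
        gcongr with i
        exact hL.norm_projMat_mul_liftMat_cOMat_mul_projMat_compl_le (c i) D (x i)
    _ = ({i | x i ∈ s} : Finset (Fin k)).card * √(10 * maxRecordProb L s D) := by
        rw [Finset.sum_ite, Finset.sum_const, Finset.sum_const_zero, add_zero, nsmul_eq_mul]
    _ ≤ s.card * √(10 * maxRecordProb L s D) := by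
        gcongr
        exact Finset.card_le_card_of_injOn x (by simp [Set.MapsTo]) hx.injOn

/-- The `ℓ`-local properties `L t` with supports `s t` recognize the transition from `P` to `P'`:
they cover `P'` and avoid `P`. -/
structure IsLocalRecognizer {τ : Type*} (L : τ → Set (X → Option Y)) (s : τ → Finset X) (ℓ : ℕ)
    (P P' : Set (X → Option Y)) : Prop where
  isLocalOn : ∀ t, IsLocalOn (L t) (s t)
  card_le : ∀ t, (s t).card ≤ ℓ
  subset_iUnion : P' ⊆ ⋃ t, L t
  disjoint : Disjoint (⋃ t, L t) P

theorem IsLocalRecognizer.norm_projMat_mul_cOparMat_mul_projMat_le {τ : Type*} [Fintype τ]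
    {L : τ → Set (X → Option Y)} {s : τ → Finset X} {ℓ : ℕ} {P P' : Set (X → Option Y)}
    (h : IsLocalRecognizer L s ℓ P P') {k : ℕ} {x : Fin k → X} (hx : Function.Injective x)
    (c : Fin k → AddChar Y ℂ) (D : X → Option Y) :
    ‖projMat P' * cOparMat x c * projMat P‖ ≤
      ℓ * √(10 * ∑ t, maxRecordProb (L t) (s t) D) := by
  have hnonneg (t : τ) : 0 ≤ 10 * maxRecordProb (L t) (s t) D :=
    mul_nonneg (by norm_num) (maxRecordProb_nonneg _ _ _)
  refine le_of_sq_le_sq ?_ (by positivity)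
  calc ‖projMat P' * cOparMat x c * projMat P‖ ^ 2
      ≤ ∑ t, ‖projMat (L t) * cOparMat x c * projMat (L t)ᶜ‖ ^ 2 :=
        sq_norm_projMat_mul_mul_projMat_le_sum h.subset_iUnion h.disjoint _
    _ ≤ ∑ t, (ℓ * √(10 * maxRecordProb (L t) (s t) D)) ^ 2 := by
        gcongr with t
        refine ((h.isLocalOn t).norm_projMat_mul_cOparMat_mul_projMat_compl_le hx c D).trans ?_
        gcongr
        exact h.card_le t
    _ = (ℓ * √(10 * ∑ t, maxRecordProb (L t) (s t) D)) ^ 2 := by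
        simp_rw [mul_pow, Finset.mul_sum, Real.sq_sqrt (Finset.sum_nonneg fun t _ => hnonneg t),
          Real.sq_sqrt (hnonneg _), Finset.mul_sum]

end Recognizer

section Capacity

theorem norm_toOp_comp_toOp_comp_toOp {ι : Type*} [Fintype ι] [DecidableEq ι]
    (A B C : Matrix ι ι ℂ) :
    ‖(toOp A).comp ((toOp B).comp (toOp C))‖ = ‖A * B * C‖ := by
  have toOp_mul (A B : Matrix ι ι ℂ) : (toOp A).comp (toOp B) = toOp (A * B) :=
    (map_mul (Matrix.toEuclideanCLM (𝕜 := ℂ)) A B).symm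
  rw [toOp_mul, toOp_mul, ← mul_assoc]
  rfl

variable {α β : Type*} [Finite α] [Finite β]

theorem le_sSup_setOf_exists_eq {p : α → β → Prop} (f : α → β → ℝ) {a : α} {b : β}
    (h : p a b) : f a b ≤ sSup {v | ∃ a b, p a b ∧ v = f a b} := by
  refine le_csSup ((Set.finite_range (Function.uncurry f)).bddAbove.mono ?_) ⟨a, b, h, rfl⟩
  rintro _ ⟨a, b, -, rfl⟩
  exact ⟨(a, b), rfl⟩

theorem sSup_setOf_exists_eq_mono {p q : α → β → Prop} {f g : α → β → ℝ}
    (hpq : ∀ a b, p a b → q a b) (hfg : ∀ a b, f a b ≤ g a b) (hg : ∀ a b, 0 ≤ g a b) :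
    sSup {v | ∃ a b, p a b ∧ v = f a b} ≤ sSup {v | ∃ a b, q a b ∧ v = g a b} := by
  refine Real.sSup_le ?_ (Real.sSup_nonneg ?_)
  · rintro _ ⟨a, b, h, rfl⟩
    exact (hfg a b).trans (le_sSup_setOf_exists_eq g (hpq a b h))
  · rintro _ ⟨a, b, -, rfl⟩
    exact hg a b

theorem stmt_10_general {X Y : Type*} [Fintype X] [DecidableEq X] [Fintype Y] [DecidableEq Y]
    [AddCommGroup Y] {k ℓ : ℕ} {X₀ : Set X} {P P' : Set (X → Option Y)}
    {τ : (Fin k → X) → (X → Option Y) → Type*} [∀ x D, Fintype (τ x D)]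
    {L : ∀ x D, τ x D → Set (X → Option Y)} {supp : ∀ x D, τ x D → Finset X}
    (h : ∀ x D, Function.Injective x → (∀ i, x i ∈ X₀) →
      IsLocalRecognizer (L x D) (supp x D) ℓ (P ∩ agreeOff D x) (P' ∩ agreeOff D x)) :
    qtc P P' k X₀ ≤ sSup {v | ∃ x D, (Function.Injective x ∧ ∀ i, x i ∈ X₀) ∧
      v = ℓ * √(10 * ∑ t, maxRecordProb (L x D t) (supp x D t) D)} := by
  refine Real.sSup_le ?_ (Real.sSup_nonneg ?_)
  · rintro _ ⟨x, c, D, hx, hx₀, rfl⟩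
    rw [norm_toOp_comp_toOp_comp_toOp]
    exact ((h x D hx hx₀).norm_projMat_mul_cOparMat_mul_projMat_le hx c D).trans
      (le_sSup_setOf_exists_eq
        (fun x D => ℓ * √(10 * ∑ t, maxRecordProb (L x D t) (supp x D t) D)) ⟨hx, hx₀⟩)
  · rintro _ ⟨x, D, -, rfl⟩
    positivity

end Capacity

end CompressedOracle

open Classical in
theorem stmt_10 {X Y : Type*} [Fintype X] [DecidableEq X] [Nonempty X]
    [Fintype Y] [DecidableEq Y] [AddCommGroup Y]
    (k ℓ : ℕ) (hk : 1 ≤ k) (hℓ : 1 ≤ ℓ) (P P' : Set (X → Option Y))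
    -- the finite family of `ℓ`-local properties `(L_t)`, with supports `supp`,
    -- depending on `x` and `D`
    (τ : Type*) [Fintype τ]
    (L : (Fin k → X) → (X → Option Y) → τ → Set (X → Option Y))
    (supp : (Fin k → X) → (X → Option Y) → τ → Finset X)
    -- supports lie in `{x_1, …, x_k}` and have size at most `ℓ`
    (hsupp : ∀ (x : Fin k → X) (D : X → Option Y) (t : τ), Function.Injective x →
      ↑(supp x D t) ⊆ Set.range x ∧ (supp x D t).card ≤ ℓ)
    -- membership in `L_t` is determined by the values on its support
    (hloc : ∀ (x : Fin k → X) (D : X → Option Y) (t : τ) (D₁ D₂ : X → Option Y),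
      Function.Injective x → (∀ a ∈ supp x D t, D₁ a = D₂ a) →
        (D₁ ∈ L x D t ↔ D₂ ∈ L x D t))
    -- a `⊥`-value on the support may be redefined to any element of `Y`
    (hmono : ∀ (x : Fin k → X) (D : X → Option Y) (t : τ) (D₁ : X → Option Y),
      Function.Injective x → D₁ ∈ L x D t → ∀ a ∈ supp x D t, D₁ a = none →
        ∀ y : Y, Function.update D₁ a (some y) ∈ L x D t)
    -- `P'|_{D|^x} ⊆ ∪_t L_t`
    (hcover : ∀ (x : Fin k → X) (D : X → Option Y), Function.Injective x →
      P' ∩ agreeOff D x ⊆ ⋃ t : τ, L x D t)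
    -- `(∪_t L_t) ∩ P|_{D|^x} = ∅`
    (hdisj : ∀ (x : Fin k → X) (D : X → Option Y), Function.Injective x →
      (⋃ t : τ, L x D t) ∩ (P ∩ agreeOff D x) = ∅) :
    qtc P P' k Set.univ ≤
      sSup {v : ℝ | ∃ (x : Fin k → X) (D : X → Option Y), Function.Injective x ∧
        v = Real.exp 1 * ℓ * Real.sqrt (10 * ∑ t : τ,
          sSup {w : ℝ | ∃ t' ∈ supp x D t, ∃ D'' : X → Option Y,
            (∀ a ∉ supp x D t, D'' a = D a) ∧
            w = if {r : Option Y | Function.update D'' t' r ∈ L x D t} = ∅ ∨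
                   {r : Option Y | Function.update D'' t' r ∈ L x D t} = Set.univ
                then (0 : ℝ)
                else ({y : Y | Function.update D'' t' (some y) ∈ L x D t}.ncard : ℝ) /
                  Fintype.card Y})} := by
  have hrec (x D) (hx : Function.Injective x) :
      IsLocalRecognizer (L x D) (supp x D) ℓ (P ∩ agreeOff D x) (P' ∩ agreeOff D x) :=
    ⟨fun t => ⟨fun D₁ D₂ hD => propext (hloc x D t D₁ D₂ hx hD), fun D₁ => hmono x D t D₁ hx⟩,
      fun t => (hsupp x D t hx).2, hcover x D hx, Set.disjoint_iff_inter_eq_empty.2 (hdisj x D hx)⟩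
  refine (stmt_10_general fun x D hx _ => hrec x D hx).trans
    (sSup_setOf_exists_eq_mono (fun _ _ h => h.1) (fun x D => ?_) fun x D => by positivity)
  rw [mul_assoc]
  exact le_mul_of_one_le_left (by positivity) (Real.one_le_exp zero_le_one)
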